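/- Suppose λ_0, …, λ_{ns−1} are pairwise distinct and satisfy the local constraints. Then the array code C is an (n,k,ℓ) MDS array code: for every subset F = {f_1 < … < f_r} ⊆ {0,…,n−1} of size r, the rℓ × rℓ matrix [H_{f_1} | … | H_{f_r}], where H_{as+b} = A_{a,b}^(r), is invertible; equivalently, any two codewords of C that agree on all coordinates outside F are equal, so any k coordinates of a codeword determine the whole codeword. -/

import Mathlib

open Matrix

/-- The `u`-th digit of `i` in base `s`. -/
def digit (s i u : ℕ) : ℕ := i / s ^ u % s

open scoped Classical in
/-- The `z`-th entry of the `(i,j)` block (a length-`t` column vector, `0 ≤ z < t`) of the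
block matrix `A_{a,b}^{(t)}`; the group size is `g` (`g = s` for the first construction and
`g = s + 1` for the second), so the relevant `λ`-index is `a·s·g + b·s + j_a`. -/
noncomputable def Aent {F : Type*} [Field F] (lam : ℕ → F) (s g a b i j z : ℕ) : F :=
  if i = j then lam (a * s * g + b * s + digit s j a) ^ z
  else if digit s i a = b ∧ digit s j a ≠ b ∧ (∀ u, u ≠ a → digit s i u = digit s j u) then
    -(lam (a * s * g + b * s + digit s j a) ^ z)
  else 0

/-- `A_{a,b}^{(t)}` as an `ℓt × ℓ` matrix; row `ρ` encodes block row `ρ / t` and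
inner row `ρ % t`. -/
noncomputable def Amat {F : Type*} [Field F] (lam : ℕ → F) (s g ℓ a b t : ℕ) :
    Matrix (Fin (ℓ * t)) (Fin ℓ) F :=
  Matrix.of fun ρ j => Aent lam s g a b ((ρ : ℕ) / t) (j : ℕ) ((ρ : ℕ) % t)

/-- The `m`-th smallest element of the finite set `B ⊆ ℕ` (junk value `0` if `m ≥ |B|`). -/
def enum (B : Finset ℕ) (m : ℕ) : ℕ := (B.sort (· ≤ ·)).getD m 0

/-- `A_{a,B}^{(t)} = [A_{a,b₁}^{(t)} | ⋯ | A_{a,b_v}^{(t)}]` as an `ℓt × ℓ|B|` matrix: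
row `ρ` encodes block row `ρ / t` and inner row `ρ % t`; column `κ` selects the
`κ / ℓ`-th member of `B` and inner column `κ % ℓ`. -/
noncomputable def AmatB {F : Type*} [Field F] (lam : ℕ → F) (s g ℓ a t : ℕ) (B : Finset ℕ) :
    Matrix (Fin (ℓ * t)) (Fin (ℓ * B.card)) F :=
  Matrix.of fun ρ κ =>
    Aent lam s g a (enum B ((κ : ℕ) / ℓ)) ((ρ : ℕ) / t) ((κ : ℕ) % ℓ) ((ρ : ℕ) % t)

/-- The local (in-group) constraints: every square matrix `A_{a,B}` (for a group index
`a < groups` and a nonempty `B ⊆ {0, …, g-1}`) is invertible. -/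
def LocalConstraints {F : Type*} [Field F] (lam : ℕ → F) (s g ℓ groups : ℕ) : Prop :=
  ∀ a < groups, ∀ B ⊆ Finset.range g, B.Nonempty → (AmatB lam s g ℓ a B.card B).det ≠ 0

/-- The horizontal concatenation `[H_{f 0} | H_{f 1} | ⋯ | H_{f (r-1)}]` of `r` parity check
matrices (each `H_{a·g+b} = A_{a,b}^{(r)}`, of size `ℓr × ℓ`), as an `ℓr × ℓr` square matrix. -/
noncomputable def Hcat {F : Type*} [Field F] (lam : ℕ → F) (s g ℓ r : ℕ) (f : ℕ → ℕ) :
    Matrix (Fin (ℓ * r)) (Fin (ℓ * r)) F :=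
  Matrix.of fun ρ κ =>
    Aent lam s g (f ((κ : ℕ) / ℓ) / g) (f ((κ : ℕ) / ℓ) % g)
      ((ρ : ℕ) / r) ((κ : ℕ) % ℓ) ((ρ : ℕ) % r)

/-- Membership in the array code: `(C_0, …, C_{n−1})` satisfies the parity check equations
`Σ_{a,b} A_{a,b}^{(r)} · C_{a·g+b} = 0` (node `m = a·g + b`). -/
def InCode {F : Type*} [Field F] (lam : ℕ → F) (s g ℓ r n : ℕ) (C : ℕ → ℕ → F) : Prop :=
  ∀ ρ < ℓ * r, ∑ m ∈ Finset.range n, ∑ j ∈ Finset.range ℓ,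
    Aent lam s g (m / g) (m % g) (ρ / r) j (ρ % r) * C m j = 0

/-!
View `F ^ ℓ` as the tensor power of `F ^ s` with one factor per group. The `z`-th rows of the blocks
of `A_{a,b}` form the operator `T_{a,b} ^ z * U_{a,b}`, where `U_{a,b}` is invertible and `T_{a,b}`
acts on the `a`-th factor only, with eigenvalues among the `λ` of the node `(a, b)`. After absorbing
the units, invertibility of a concatenation of parity check matrices says that the first `r` terms
of the sequence `w z = ∑ T_{a,b} ^ z (y_{a,b})` over the chosen nodes determine `y`.

The local constraints make this true inside one group: its first `v` terms, `v` being the number of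
chosen nodes of the group, determine the whole sequence of the group, which therefore satisfies a
linear recurrence of order `v`. The coefficients of this recurrence commute with the operators of
all other groups, so the groups can be eliminated one after the other, and `r` vanishing initial
terms force `w = 0`. The groups have disjoint spectra, so coprime polynomials in the shift
annihilate the sequences of the different groups; hence each of these sequences vanishes, and the
local constraints give `y = 0`.
-/

section BlockVandermonde

variable {R V : Type*} [CommRing R] [AddCommGroup V] [Module R V]

/-- The orbit `u, S u, S² u, …` of a vector under an endomorphism, as a linear map in `u`. -/
def orbit (S : Module.End R V) : V →ₗ[R] ℕ → V :=
  LinearMap.pi fun z => S ^ z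

/-- The sequence `z ↦ ∑ b, T b ^ z (y b)` of power sums of the operators `T b`, as a linear map
in `y`. -/
def powerSums {β : Type*} [Fintype β] (T : β → Module.End R V) : (β → V) →ₗ[R] ℕ → V :=
  ∑ b, orbit (T b) ∘ₗ LinearMap.proj b

/-- The block Vandermonde operator with `v` block rows: the first `v` terms of `powerSums`. It is
the linear map of the block matrix with `(z, b)` block `T b ^ z`. -/
def blockVandermonde {β : Type*} [Fintype β] (T : β → Module.End R V) (v : ℕ) :
    (β → V) →ₗ[R] Fin v → V :=
  LinearMap.funLeft R V Fin.val ∘ₗ powerSums T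

/-- The shift `(w z) ↦ (w (z + 1))` on sequences. -/
def sequenceShift (R V : Type*) [CommRing R] [AddCommGroup V] [Module R V] :
    Module.End R (ℕ → V) :=
  LinearMap.funLeft R V Nat.succ

/-- The failure `w (z + v) - M (w z, …, w (z + v - 1))` of a sequence `w` to satisfy the order `v`
linear recurrence with coefficient map `M`. -/
def recurrenceDefect {v : ℕ} (M : (Fin v → V) →ₗ[R] V) : (ℕ → V) →ₗ[R] ℕ → V :=
  LinearMap.pi fun z =>
    LinearMap.proj (z + v) - M ∘ₗ LinearMap.funLeft R V fun i : Fin v => z + i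

@[simp]
lemma orbit_apply (S : Module.End R V) (u : V) (z : ℕ) : orbit S u z = (S ^ z) u := rfl

lemma sequenceShift_apply (w : ℕ → V) (z : ℕ) : sequenceShift R V w z = w (z + 1) := rfl

lemma recurrenceDefect_apply {v : ℕ} (M : (Fin v → V) →ₗ[R] V) (w : ℕ → V) (z : ℕ) :
    recurrenceDefect M w z = w (z + v) - M fun i => w (z + i) := rfl

section PowerSums

variable {β : Type*} [Fintype β] (T : β → Module.End R V)

lemma powerSums_eq_sum_orbit (y : β → V) : powerSums T y = ∑ b, orbit (T b) (y b) := by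
  simp [powerSums]

lemma powerSums_apply (y : β → V) (z : ℕ) : powerSums T y z = ∑ b, (T b ^ z) (y b) := by
  simp [powerSums_eq_sum_orbit]

lemma blockVandermonde_apply {v : ℕ} (y : β → V) (z : Fin v) :
    blockVandermonde T v y z = ∑ b, (T b ^ (z : ℕ)) (y b) :=
  powerSums_apply T y z

lemma powerSums_apply_add (y : β → V) (z i : ℕ) :
    powerSums T y (z + i) = powerSums T (fun b => (T b ^ z) (y b)) i := by
  simp only [powerSums_apply, add_comm z i, pow_add, Module.End.mul_apply]

lemma powerSums_apply_map {S : Module.End R V} (hS : ∀ b, Commute S (T b)) (y : β → V) (z : ℕ) :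
    powerSums T (fun b => S (y b)) z = S (powerSums T y z) := by
  simp only [powerSums_apply, map_sum, ← Module.End.mul_apply, ((hS _).pow_right z).eq]

lemma powerSums_sigma {ι : Type*} [Fintype ι] {γ : ι → Type*} [∀ a, Fintype (γ a)]
    (T : ∀ a, γ a → Module.End R V) (y : (Σ a, γ a) → V) :
    powerSums (fun p : Σ a, γ a => T p.1 p.2) y = ∑ a, powerSums (T a) fun b => y ⟨a, b⟩ := by
  simp only [powerSums_eq_sum_orbit, Fintype.sum_sigma]

end PowerSums

lemma eq_zero_of_recurrenceDefect_eq_zero {v : ℕ} {M : (Fin v → V) →ₗ[R] V} {w : ℕ → V}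
    (hw : recurrenceDefect M w = 0) (h0 : ∀ z < v, w z = 0) : w = 0 := by
  funext z
  induction z using Nat.strong_induction_on with
  | _ z ih =>
    rcases lt_or_ge z v with hz | hz
    · exact h0 z hz
    · obtain ⟨t, rfl⟩ := Nat.exists_eq_add_of_le' hz
      have hwindow : (fun i : Fin v => w (t + i)) = 0 := funext fun i => ih _ (by omega)
      simpa [recurrenceDefect_apply, hwindow] using congrFun hw t

lemma recurrenceDefect_orbit {v : ℕ} {M : (Fin v → V) →ₗ[R] V} {S : Module.End R V}
    (hS : ∀ w, M (fun i => S (w i)) = S (M w)) (u : V) :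
    recurrenceDefect M (orbit S u) = orbit S (recurrenceDefect M (orbit S u) 0) := by
  have hpow (z : ℕ) (w : Fin v → V) : M (fun i => (S ^ z) (w i)) = (S ^ z) (M w) := by
    induction z with
    | zero => rfl
    | succ z ih => simp only [pow_succ', Module.End.mul_apply, hS, ih]
  funext z
  simp only [recurrenceDefect_apply, orbit_apply, pow_add, Module.End.mul_apply, hpow, map_sub,
    pow_zero, Module.End.one_apply]

/-- `M` expresses the last of `v + 1` consecutive power sums through the preceding ones; it exists
because these determine the whole sequence. -/
lemma exists_recurrence_of_blockVandermonde_bijective {β : Type*} [Fintype β]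
    {T : β → Module.End R V} {v : ℕ} (hT : Function.Bijective (blockVandermonde T v)) :
    ∃ M : (Fin v → V) →ₗ[R] V, (∀ y, recurrenceDefect M (powerSums T y) = 0) ∧
      ∀ S : Module.End R V, (∀ b, Commute S (T b)) → ∀ w, M (fun i => S (w i)) = S (M w) := by
  let e := LinearEquiv.ofBijective (blockVandermonde T v) hT
  refine ⟨LinearMap.proj v ∘ₗ powerSums T ∘ₗ e.symm.toLinearMap, fun y => ?_, fun S hS w => ?_⟩
  · funext z
    have hwindow : (fun i : Fin v => powerSums T y (z + i)) = e fun b => (T b ^ z) (y b) :=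
      funext fun i => powerSums_apply_add T y z i
    simp [recurrenceDefect_apply, hwindow, powerSums_apply_add T y z v]
  · obtain ⟨y, rfl⟩ := e.surjective w
    have hmap : (fun i => S (e y i)) = e fun b => S (y b) :=
      funext fun i => (powerSums_apply_map T hS y i).symm
    simp [hmap, powerSums_apply_map T hS]

/-- Applying the recurrence of one group removes that group from the sum and maps the power sums
of every other group to power sums of the same group, so induction on the number of groups
applies. -/
lemma sum_powerSums_eq_zero {ι : Type*} {γ : ι → Type*} [∀ a, Fintype (γ a)]
    {T : ∀ a, γ a → Module.End R V} {v : ι → ℕ}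
    (hT : ∀ a, Function.Bijective (blockVandermonde (T a) (v a)))
    (hcomm : ∀ a a', a ≠ a' → ∀ b b', Commute (T a b) (T a' b')) (A : Finset ι)
    (y : ∀ a, γ a → V) (hy : ∀ z < ∑ a ∈ A, v a, (∑ a ∈ A, powerSums (T a) (y a)) z = 0) :
    ∑ a ∈ A, powerSums (T a) (y a) = 0 := by
  classical
  induction A using Finset.induction_on generalizing y with
  | empty => rfl
  | insert a A ha ih =>
    obtain ⟨M, hM, hMcomm⟩ := exists_recurrence_of_blockVandermonde_bijective (hT a)
    rw [Finset.sum_insert ha] at hy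
    let y' (c : ι) (b : γ c) : V := recurrenceDefect M (orbit (T c b) (y c b)) 0
    have hdefect : recurrenceDefect M (∑ c ∈ insert a A, powerSums (T c) (y c)) =
        ∑ c ∈ A, powerSums (T c) (y' c) := by
      rw [Finset.sum_insert ha, map_add, hM, zero_add, map_sum]
      refine Finset.sum_congr rfl fun c hc => ?_
      have hca : c ≠ a := fun h => ha (h ▸ hc)
      simp only [powerSums_eq_sum_orbit, map_sum, y']
      exact Finset.sum_congr rfl fun b _ =>
        recurrenceDefect_orbit (hMcomm _ (hcomm c a hca b)) (y c b)
    refine eq_zero_of_recurrenceDefect_eq_zero (M := M) (hdefect.trans (ih y' fun z hz => ?_))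
      fun z hz => hy z (by omega)
    have hwindow : (fun i : Fin (v a) =>
        (∑ c ∈ insert a A, powerSums (T c) (y c)) (z + i)) = 0 := by
      funext i
      exact hy _ (by omega)
    rw [← hdefect, recurrenceDefect_apply, hwindow, hy _ (by omega), map_zero, sub_zero]

open Polynomial in
lemma aeval_sequenceShift_orbit (S : Module.End R V) (p : R[X]) (u : V) :
    aeval (sequenceShift R V) p (orbit S u) = orbit S (aeval S p u) := by
  have hpow (i : ℕ) : (sequenceShift R V ^ i) (orbit S u) = orbit S ((S ^ i) u) := by
    induction i with
    | zero => rfl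
    | succ i ih =>
      rw [pow_succ', Module.End.mul_apply, ih]
      funext z
      simp only [sequenceShift_apply, orbit_apply, ← Module.End.mul_apply, ← pow_add]
      congr 2
      omega
  simp only [aeval_eq_sum_range, LinearMap.sum_apply, LinearMap.smul_apply, hpow, map_sum, map_smul]

open Polynomial in
lemma eq_zero_of_sum_eq_zero_of_aeval_eq_zero {ι : Type*} [Fintype ι] {S : Module.End R V}
    {p : ι → R[X]} (hp : Pairwise fun i j => IsCoprime (p i) (p j)) {w : ι → V}
    (hw : ∀ i, aeval S (p i) (w i) = 0) (hsum : ∑ i, w i = 0) (i : ι) : w i = 0 := by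
  classical
  have hcop : IsCoprime (p i) (∏ j ∈ Finset.univ.erase i, p j) :=
    IsCoprime.prod_right fun j hj => hp (Finset.ne_of_mem_erase hj).symm
  refine Submodule.disjoint_def.mp (disjoint_ker_aeval_of_isCoprime S hcop) _ (hw i) ?_
  rw [← Finset.add_sum_erase _ _ (Finset.mem_univ i)] at hsum
  rw [eq_neg_of_add_eq_zero_left hsum]
  refine Submodule.neg_mem _ (Submodule.sum_mem _ fun j hj => ?_)
  rw [LinearMap.mem_ker, ← Finset.prod_erase_mul _ _ hj, map_mul, Module.End.mul_apply, hw,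
    map_zero]

theorem blockVandermonde_sigma_injective {ι : Type*} [Fintype ι] {γ : ι → Type*}
    [∀ a, Fintype (γ a)] {T : ∀ a, γ a → Module.End R V} {v : ι → ℕ}
    (hT : ∀ a, Function.Bijective (blockVandermonde (T a) (v a)))
    (hcomm : ∀ a a', a ≠ a' → ∀ b b', Commute (T a b) (T a' b'))
    (hcop : ∀ a a', a ≠ a' → ∀ b b', IsCoprime (minpoly R (T a b)) (minpoly R (T a' b'))) :
    Function.Injective (blockVandermonde (fun p : Σ a, γ a => T p.1 p.2) (∑ a, v a)) := by
  rw [injective_iff_map_eq_zero]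
  intro y hy
  have hsum : ∑ a, powerSums (T a) (fun b => y ⟨a, b⟩) = 0 := by
    refine sum_powerSums_eq_zero hT hcomm _ _ fun z hz => ?_
    rw [← powerSums_sigma]
    exact congrFun hy ⟨z, hz⟩
  have hann (a : ι) : Polynomial.aeval (sequenceShift R V) (∏ b, minpoly R (T a b))
      (powerSums (T a) fun b => y ⟨a, b⟩) = 0 := by
    classical
    rw [powerSums_eq_sum_orbit, map_sum]
    refine Finset.sum_eq_zero fun b hb => ?_
    rw [aeval_sequenceShift_orbit, ← Finset.prod_erase_mul _ _ hb, map_mul, minpoly.aeval,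
      mul_zero, LinearMap.zero_apply, map_zero]
  have hzero (a : ι) : powerSums (T a) (fun b => y ⟨a, b⟩) = 0 :=
    eq_zero_of_sum_eq_zero_of_aeval_eq_zero
      (fun a a' h => IsCoprime.prod_left fun b _ => IsCoprime.prod_right fun b' _ =>
        hcop a a' h b b') hann hsum a
  funext ⟨a, b⟩
  have hlocal : blockVandermonde (T a) (v a) (fun b => y ⟨a, b⟩) = 0 :=
    funext fun z => congrFun (hzero a) z
  exact congrFun ((injective_iff_map_eq_zero _).mp (hT a).injective _ hlocal) b

end BlockVandermonde

section CoordinateAction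

variable {R ι κ : Type*} [CommRing R] [DecidableEq ι] [Fintype κ] [DecidableEq κ]

/-- The action of `κ × κ` matrices on the `a`-th factor of the tensor power
`(ι → κ) → R` of `κ → R`; it is the paper's `I ⊗ M ⊗ I`. -/
def coordinateAction (a : ι) : Matrix κ κ R →ₐ[R] Module.End R ((ι → κ) → R) :=
  AlgHom.ofLinearMap
    { toFun M :=
        { toFun x f := ∑ c, M (f a) c * x (Function.update f a c)
          map_add' x y := by ext f; simp [mul_add, Finset.sum_add_distrib]
          map_smul' r x := by ext f; simp [Finset.mul_sum, mul_left_comm] }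
      map_add' M N := by ext; simp [add_mul, Finset.sum_add_distrib]
      map_smul' r M := by ext; simp [Finset.mul_sum, mul_assoc] }
    (by ext x f; simp [Matrix.one_apply])
    (fun M N => by
      refine LinearMap.ext fun x => funext fun f => ?_
      simp only [LinearMap.coe_mk, AddHom.coe_mk, Module.End.mul_apply, Matrix.mul_apply,
        Function.update_self, Function.update_idem, Finset.sum_mul, Finset.mul_sum, mul_assoc]
      exact Finset.sum_comm)

lemma coordinateAction_apply (a : ι) (M : Matrix κ κ R) (x : (ι → κ) → R) (f : ι → κ) :
    coordinateAction a M x f = ∑ c, M (f a) c * x (Function.update f a c) := rfl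

lemma coordinateAction_commute {a a' : ι} (h : a ≠ a') (M N : Matrix κ κ R) :
    Commute (coordinateAction a M) (coordinateAction a' N) := by
  refine LinearMap.ext fun x => funext fun f => ?_
  simp only [Module.End.mul_apply, coordinateAction_apply, Function.update_of_ne h,
    Function.update_of_ne h.symm, Finset.mul_sum]
  rw [Finset.sum_comm]
  refine Finset.sum_congr rfl fun c _ => Finset.sum_congr rfl fun c' _ => ?_
  rw [Function.update_comm h, mul_left_comm]

lemma coordinateAction_single [Fintype ι] (a : ι) (M : Matrix κ κ R) (f g : ι → κ) :
    coordinateAction a M (Pi.single g 1) f =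
      if ∀ u ≠ a, f u = g u then M (f a) (g a) else 0 := by
  simp only [coordinateAction_apply, Pi.single_apply, Function.update_eq_iff, mul_ite, mul_one,
    mul_zero, ite_and, Finset.sum_ite_eq', Finset.mem_univ, if_true]

end CoordinateAction

section KernelMatrix

variable {R : Type*} [CommRing R] {s : ℕ}

/-- The matrix whose row `b` is `1` off the diagonal and whose other rows vanish; it is zero when
`s ≤ b`. -/
def offDiagonalRow (R : Type*) [CommRing R] (s b : ℕ) : Matrix (Fin s) (Fin s) R :=
  Matrix.of fun i j => if (i : ℕ) = b ∧ (j : ℕ) ≠ b then 1 else 0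

lemma offDiagonalRow_mul_self (b : ℕ) : offDiagonalRow R s b * offDiagonalRow R s b = 0 := by
  ext i j
  rw [Matrix.mul_apply]
  refine Finset.sum_eq_zero fun c _ => ?_
  simp only [offDiagonalRow, Matrix.of_apply]
  split_ifs <;> simp_all

/-- The matrix `1 - offDiagonalRow R s b` as a unit. The `z`-th row of every block of the kernel
matrix `K_{a,b}` is this unit times the `z`-th power of a diagonal matrix. -/
def kernelUnit (R : Type*) [CommRing R] (s b : ℕ) : (Matrix (Fin s) (Fin s) R)ˣ where
  val := 1 - offDiagonalRow R s b
  inv := 1 + offDiagonalRow R s b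
  val_inv := by simp [sub_mul, mul_add, offDiagonalRow_mul_self]
  inv_val := by simp [add_mul, mul_sub, offDiagonalRow_mul_self]

lemma kernelUnit_mul_diagonal_apply (b : ℕ) (μ : Fin s → R) (i j : Fin s) :
    ((kernelUnit R s b : Matrix (Fin s) (Fin s) R) * diagonal μ) i j =
      if i = j then μ j else if (i : ℕ) = b ∧ (j : ℕ) ≠ b then -μ j else 0 := by
  rw [Matrix.mul_diagonal]
  simp only [kernelUnit, offDiagonalRow, Matrix.sub_apply, Matrix.one_apply, Matrix.of_apply]
  split_ifs <;> simp_all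

end KernelMatrix

section NodeOperator

variable {F : Type*} [Field F] {m s : ℕ}

/-- `kernelUnit F s b` acting on the `a`-th coordinate. -/
def nodeUnit (F : Type*) [Field F] {m : ℕ} (s : ℕ) (a : Fin m) (b : ℕ) :
    (Module.End F ((Fin m → Fin s) → F))ˣ :=
  Units.map (coordinateAction (R := F) (κ := Fin s) a).toRingHom.toMonoidHom (kernelUnit F s b)

/-- The elements `λ_{asg+bs+c}`, `c < s`, belonging to the node `b` of group `a`. -/
def nodeLam (lam : ℕ → F) (s g a b : ℕ) (c : Fin s) : F :=
  lam (a * s * g + b * s + c)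

/-- The diagonal operator of the node `b` of group `a`, conjugated by `kernelUnit F s b`. The
conjugation makes the `z`-th rows of the blocks of `A_{a,b}` equal to
`nodeOperator ^ z * nodeUnit`, with operators of different groups commuting. -/
def nodeOperator (lam : ℕ → F) (s g : ℕ) (a : Fin m) (b : ℕ) :
    Module.End F ((Fin m → Fin s) → F) :=
  coordinateAction a
    ((kernelUnit F s b).val * diagonal (nodeLam lam s g a b) * (kernelUnit F s b)⁻¹.val)

lemma nodeOperator_commute (lam : ℕ → F) (s g : ℕ) {a a' : Fin m} (h : a ≠ a') (b b' : ℕ) :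
    Commute (nodeOperator lam s g a b) (nodeOperator lam s g a' b') :=
  coordinateAction_commute h _ _

open Polynomial in
lemma minpoly_nodeOperator_dvd (lam : ℕ → F) (s g : ℕ) (a : Fin m) (b : ℕ) :
    minpoly F (nodeOperator lam s g a b) ∣ ∏ c, (X - C (nodeLam lam s g a b c)) := by
  refine minpoly.dvd _ _ ?_
  rw [nodeOperator, aeval_algHom_apply, ← Matrix.charpoly_diagonal,
    ← Matrix.charpoly_units_conj (kernelUnit F s b), ← Matrix.coe_units_inv,
    Matrix.aeval_self_charpoly, map_zero]

lemma isCoprime_minpoly_nodeOperator {lam : ℕ → F} {g : ℕ} {a a' : Fin m} {b b' : ℕ}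
    (h : ∀ c c' : Fin s, nodeLam lam s g a b c ≠ nodeLam lam s g a' b' c') :
    IsCoprime (minpoly F (nodeOperator lam s g a b)) (minpoly F (nodeOperator lam s g a' b')) :=
  IsCoprime.of_isCoprime_of_dvd_left
    (IsCoprime.of_isCoprime_of_dvd_right
      (IsCoprime.prod_left fun c _ => IsCoprime.prod_right fun c' _ =>
        Polynomial.isCoprime_X_sub_C_of_isUnit_sub (sub_ne_zero.mpr (h c c')).isUnit)
      (minpoly_nodeOperator_dvd lam s g a' b'))
    (minpoly_nodeOperator_dvd lam s g a b)

lemma nodeOperator_pow_mul_nodeUnit (lam : ℕ → F) (s g : ℕ) (a : Fin m) (b z : ℕ) :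
    nodeOperator lam s g a b ^ z * nodeUnit F s a b =
      coordinateAction a ((kernelUnit F s b).val * diagonal (nodeLam lam s g a b ^ z)) := by
  change coordinateAction a _ ^ z * coordinateAction a _ = _
  rw [← map_pow, ← map_mul, Units.conj_pow, Units.inv_mul_cancel_right, Matrix.diagonal_pow]

lemma digit_finFunctionFinEquiv (f : Fin m → Fin s) (a : Fin m) :
    digit s (finFunctionFinEquiv f : ℕ) a = f a :=
  congrArg Fin.val (congrFun (finFunctionFinEquiv.symm_apply_apply f) a)

lemma digit_eq_zero_of_lt_pow {i u : ℕ} (hi : i < s ^ u) : digit s i u = 0 := by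
  rw [digit, Nat.div_eq_of_lt hi, Nat.zero_mod]

lemma forall_ne_digit_eq_iff (a : Fin m) (f h : Fin m → Fin s) :
    (∀ u, u ≠ (a : ℕ) → digit s (finFunctionFinEquiv f : ℕ) u =
      digit s (finFunctionFinEquiv h : ℕ) u) ↔ ∀ u ≠ a, f u = h u := by
  refine ⟨fun H u hu => ?_, fun H u hu => ?_⟩
  · simpa only [digit_finFunctionFinEquiv, Fin.val_inj] using H u (Fin.val_ne_of_ne hu)
  · rcases lt_or_ge u m with hum | hum
    · have hdigit := digit_finFunctionFinEquiv (s := s) (a := ⟨u, hum⟩)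
      rw [hdigit, hdigit, H ⟨u, hum⟩ (Fin.ne_of_val_ne hu)]
    · have hpow : s ^ m ≤ s ^ u := Nat.pow_le_pow_right (f a).pos hum
      rw [digit_eq_zero_of_lt_pow ((Fin.is_lt _).trans_le hpow),
        digit_eq_zero_of_lt_pow ((Fin.is_lt _).trans_le hpow)]

lemma Aent_finFunctionFinEquiv (lam : ℕ → F) (g : ℕ) (a : Fin m) (b : ℕ) (f h : Fin m → Fin s)
    (z : ℕ) :
    Aent lam s g a b (finFunctionFinEquiv f : ℕ) (finFunctionFinEquiv h : ℕ) z =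
      (nodeOperator lam s g a b ^ z * nodeUnit F s a b) (Pi.single h 1) f := by
  rw [nodeOperator_pow_mul_nodeUnit, coordinateAction_single, kernelUnit_mul_diagonal_apply]
  have hfh : (finFunctionFinEquiv f : ℕ) = finFunctionFinEquiv h ↔
      f a = h a ∧ ∀ u ≠ a, f u = h u := by
    rw [Fin.val_inj, finFunctionFinEquiv.injective.eq_iff]
    simpa only [Function.update_eq_self] using
      Function.update_eq_iff (f := f) (a := a) (b := f a) (g := h)
  simp only [Aent, hfh, forall_ne_digit_eq_iff, digit_finFunctionFinEquiv, Pi.pow_apply, nodeLam]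
  split_ifs <;> simp_all

end NodeOperator

lemma blockVandermonde_bijective_of_injective {F V β : Type*} [Field F] [AddCommGroup V]
    [Module F V] [Module.Finite F V] [Fintype β] {T : β → Module.End F V} {t : ℕ}
    (ht : Fintype.card β = t) (hT : Function.Injective (blockVandermonde T t)) :
    Function.Bijective (blockVandermonde T t) := by
  refine ⟨hT, (LinearMap.injective_iff_surjective_of_finrank_eq_finrank ?_).mp hT⟩
  simp [Module.finrank_pi_fintype, ht]

section ParityCheckMatrix

variable {F I β : Type*} [Field F] [DecidableEq I] [Fintype β]

/-- The matrix with `t` block rows whose `(z, b)` block is the matrix of `T b ^ z * U b`. For node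
operators and node units it is the concatenation of the matrices `A_{a,b}^(t)` of the paper, its
rows and columns being indexed by pairs instead of numbers. -/
def parityCheckMatrix (T : β → Module.End F (I → F)) (U : β → (Module.End F (I → F))ˣ) (t : ℕ) :
    Matrix (I × Fin t) (β × I) F :=
  Matrix.of fun p q => (T q.1 ^ (p.2 : ℕ) * (U q.1).val) (Pi.single q.2 1) p.1

variable {T : β → Module.End F (I → F)}

lemma parityCheckMatrix_mulVec [Fintype I] (U : β → (Module.End F (I → F))ˣ) (t : ℕ) (x : β × I → F)
    (p : I × Fin t) :
    (parityCheckMatrix T U t *ᵥ x) p =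
      blockVandermonde T t (fun b => (U b).val fun i => x (b, i)) p.2 p.1 := by
  have hblock (b : β) : ∑ i, parityCheckMatrix T U t p (b, i) * x (b, i) =
      (T b ^ (p.2 : ℕ)) ((U b).val fun i => x (b, i)) p.1 := by
    rw [← Module.End.mul_apply, ← LinearMap.toMatrix'_mulVec]
    simp only [Matrix.mulVec, dotProduct, LinearMap.toMatrix'_apply, parityCheckMatrix,
      Matrix.of_apply]
  simp only [Matrix.mulVec, dotProduct, Fintype.sum_prod_type, hblock, blockVandermonde_apply,
    Finset.sum_apply]

lemma mulVec_parityCheckMatrix_injective_iff [Fintype I] (U : β → (Module.End F (I → F))ˣ) (t : ℕ) :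
    Function.Injective (parityCheckMatrix T U t).mulVec ↔
      Function.Injective (blockVandermonde T t) := by
  let pre : (β × I → F) ≃ (β → I → F) := (Equiv.curry β I F).trans
    (Equiv.piCongrRight fun b => (LinearMap.GeneralLinearGroup.toLinearEquiv (U b)).toEquiv)
  let post : (Fin t → I → F) ≃ (I × Fin t → F) :=
    (Equiv.piComm fun _ _ => F).trans (Equiv.curry I (Fin t) F).symm
  have hmulVec : (parityCheckMatrix T U t).mulVec = post ∘ blockVandermonde T t ∘ pre :=
    funext fun x => funext fun p => parityCheckMatrix_mulVec U t x p
  rw [hmulVec, post.comp_injective, pre.injective_comp]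

lemma det_submatrix_parityCheckMatrix_ne_zero_iff [Finite I] {N : Type*} [Fintype N]
    [DecidableEq N] {t : ℕ} (U : β → (Module.End F (I → F))ˣ)
    (er : N ≃ I × Fin t) (ec : N ≃ β × I) :
    ((parityCheckMatrix T U t).submatrix er ec).det ≠ 0 ↔
      Function.Injective (blockVandermonde T t) := by
  cases nonempty_fintype I
  rw [← isUnit_iff_ne_zero, ← Matrix.isUnit_iff_isUnit_det, ← Matrix.mulVec_injective_iff_isUnit,
    ← mulVec_parityCheckMatrix_injective_iff U]
  have hmulVec : ((parityCheckMatrix T U t).submatrix er ec).mulVec =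
      (Equiv.arrowCongr er (Equiv.refl F)).symm ∘ (parityCheckMatrix T U t).mulVec ∘
        Equiv.arrowCongr ec (Equiv.refl F) :=
    funext fun x => Matrix.submatrix_mulVec_equiv _ x er ec
  rw [hmulVec, Equiv.comp_injective, Equiv.injective_comp]

end ParityCheckMatrix

section Indexing

lemma enum_eq_orderIsoOfFin (B : Finset ℕ) (i : Fin B.card) :
    enum B i = B.orderIsoOfFin rfl i := by
  rw [Finset.coe_orderIsoOfFin_apply, Finset.orderEmbOfFin_apply, enum]
  simp

/-- The row index `ρ` of `Amat`, decoded into the digits of `ρ / t` and the inner row `ρ % t`. -/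
def rowEquiv (s m t : ℕ) : Fin (s ^ m * t) ≃ (Fin m → Fin s) × Fin t :=
  finProdFinEquiv.symm.trans (finFunctionFinEquiv.symm.prodCongr (Equiv.refl _))

/-- The column index `κ` of `AmatB` and `Hcat`, decoded into the `κ / ℓ`-th member of `B` and the
inner column `κ % ℓ`. -/
def columnEquiv (ℓ : ℕ) (B : Finset ℕ) : Fin (ℓ * B.card) ≃ B × Fin ℓ :=
  (finCongr (mul_comm _ _)).trans <| finProdFinEquiv.symm.trans <|
    (B.orderIsoOfFin rfl).toEquiv.prodCongr (Equiv.refl _)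

/-- `columnEquiv` with the inner column decoded into its digits. -/
def columnDigitsEquiv (s m : ℕ) (B : Finset ℕ) : Fin (s ^ m * B.card) ≃ B × (Fin m → Fin s) :=
  (columnEquiv (s ^ m) B).trans ((Equiv.refl _).prodCongr finFunctionFinEquiv.symm)

variable {s m : ℕ}

lemma finFunctionFinEquiv_rowEquiv_fst {t : ℕ} (ρ : Fin (s ^ m * t)) :
    (finFunctionFinEquiv (rowEquiv s m t ρ).1 : ℕ) = ρ / t := by
  simp [rowEquiv]

lemma rowEquiv_snd {t : ℕ} (ρ : Fin (s ^ m * t)) : ((rowEquiv s m t ρ).2 : ℕ) = ρ % t := rfl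

lemma columnEquiv_fst {ℓ : ℕ} {B : Finset ℕ} (κ : Fin (ℓ * B.card)) :
    ((columnEquiv ℓ B κ).1 : ℕ) = enum B (κ / ℓ) :=
  (enum_eq_orderIsoOfFin B _).symm

lemma columnEquiv_snd {ℓ : ℕ} {B : Finset ℕ} (κ : Fin (ℓ * B.card)) :
    ((columnEquiv ℓ B κ).2 : ℕ) = κ % ℓ := rfl

lemma columnDigitsEquiv_fst {B : Finset ℕ} (κ : Fin (s ^ m * B.card)) :
    ((columnDigitsEquiv s m B κ).1 : ℕ) = enum B (κ / s ^ m) :=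
  columnEquiv_fst κ

lemma finFunctionFinEquiv_columnDigitsEquiv_snd {B : Finset ℕ} (κ : Fin (s ^ m * B.card)) :
    (finFunctionFinEquiv (columnDigitsEquiv s m B κ).2 : ℕ) = κ % s ^ m := by
  simp [columnDigitsEquiv, columnEquiv_snd]

lemma mul_add_div_of_lt {b g : ℕ} (hb : b < g) (a : ℕ) : (a * g + b) / g = a :=
  Nat.div_eq_of_lt_le (Nat.le_add_right _ _) (by rw [Nat.succ_mul]; omega)

/-- The positions inside group `a` of the nodes belonging to `Fs`. -/
def nodesInGroup (g : ℕ) (Fs : Finset ℕ) (a : ℕ) : Finset ℕ :=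
  {b ∈ Finset.range g | a * g + b ∈ Fs}

/-- A node `q = a * g + b`, decoded into its group `a` and its position `b` in that group. -/
def groupEquiv {g : ℕ} {Fs : Finset ℕ} (hFs : Fs ⊆ Finset.range (m * g)) :
    Fs ≃ Σ a : Fin m, nodesInGroup g Fs a where
  toFun q :=
    have hq : q.1 < m * g := Finset.mem_range.mp (hFs q.2)
    ⟨⟨q / g, Nat.div_lt_of_lt_mul (by rwa [mul_comm])⟩, ⟨q % g, Finset.mem_filter.mpr
      ⟨Finset.mem_range.mpr (Nat.mod_lt _ (Nat.pos_of_mul_pos_left (Nat.zero_lt_of_lt hq))),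
        by rw [Nat.div_add_mod']; exact q.2⟩⟩⟩
  invFun p := ⟨p.1 * g + p.2, (Finset.mem_filter.mp p.2.2).2⟩
  left_inv q := Subtype.ext (Nat.div_add_mod' _ _)
  right_inv p := by
    have hb : (p.2 : ℕ) < g := Finset.mem_range.mp (Finset.mem_filter.mp p.2.2).1
    refine Sigma.subtype_ext (Fin.ext ?_) ?_
    · exact mul_add_div_of_lt hb _
    · exact Nat.mul_add_mod_of_lt hb

lemma sum_card_nodesInGroup {g : ℕ} {Fs : Finset ℕ} (hFs : Fs ⊆ Finset.range (m * g)) :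
    ∑ a : Fin m, (nodesInGroup g Fs a).card = Fs.card := by
  simpa using (Fintype.card_congr (groupEquiv hFs)).symm

end Indexing

lemma nodeLam_ne_nodeLam {F : Type*} {lam : ℕ → F} {s g m : ℕ}
    (hdist : ∀ i < m * g * s, ∀ j < m * g * s, lam i = lam j → i / (s * g) = j / (s * g))
    {a a' : Fin m} (h : a ≠ a') {b b' : ℕ} (hb : b < g) (hb' : b' < g) (c c' : Fin s) :
    nodeLam lam s g a b c ≠ nodeLam lam s g a' b' c' := by
  have hoffset {b : ℕ} (hb : b < g) (c : Fin s) : b * s + c < s * g := by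
    have hrow := Nat.mul_le_mul_right s hb
    rw [Nat.succ_mul] at hrow
    linarith [c.isLt]
  have hgroup (a : Fin m) {b : ℕ} (hb : b < g) (c : Fin s) :
      (a * s * g + b * s + c) / (s * g) = a := by
    rw [mul_assoc, add_assoc, mul_add_div_of_lt (hoffset hb c)]
  have hlt (a : Fin m) {b : ℕ} (hb : b < g) (c : Fin s) :
      a * s * g + b * s + c < m * g * s := by
    have hrow := Nat.mul_le_mul_right (s * g) a.isLt
    rw [Nat.succ_mul] at hrow
    linarith [hoffset hb c]
  intro heq
  have hindex := hdist _ (hlt a hb c) _ (hlt a' hb' c') heq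
  rw [hgroup a hb c, hgroup a' hb' c'] at hindex
  exact h (Fin.ext hindex)

section Invertibility

variable {F : Type*} [Field F] {lam : ℕ → F} {s g m : ℕ}

lemma AmatB_eq_submatrix (a : Fin m) (t : ℕ) (B : Finset ℕ) :
    AmatB lam s g (s ^ m) a t B =
      (parityCheckMatrix (fun b : B => nodeOperator lam s g a b) (fun b => nodeUnit F s a b)
        t).submatrix (rowEquiv s m t) (columnDigitsEquiv s m B) := by
  ext ρ κ
  simp only [AmatB, parityCheckMatrix, Matrix.submatrix_apply, Matrix.of_apply,
    ← Aent_finFunctionFinEquiv, finFunctionFinEquiv_rowEquiv_fst, rowEquiv_snd,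
    columnDigitsEquiv_fst, finFunctionFinEquiv_columnDigitsEquiv_snd]

lemma Hcat_eq_submatrix {Fs : Finset ℕ} (hFs : Fs ⊆ Finset.range (m * g)) :
    Hcat lam s g (s ^ m) Fs.card (enum Fs) =
      (parityCheckMatrix (fun p : Σ a : Fin m, nodesInGroup g Fs a => nodeOperator lam s g p.1 p.2)
        (fun p => nodeUnit F s p.1 p.2) Fs.card).submatrix (rowEquiv s m Fs.card)
        ((columnDigitsEquiv s m Fs).trans ((groupEquiv hFs).prodCongr (Equiv.refl _))) := by
  ext ρ κ
  simp only [Hcat, parityCheckMatrix, Matrix.submatrix_apply, Matrix.of_apply,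
    ← Aent_finFunctionFinEquiv, finFunctionFinEquiv_rowEquiv_fst, rowEquiv_snd, Equiv.trans_apply,
    Equiv.prodCongr_apply, Prod.map_fst, Prod.map_snd, Equiv.refl_apply, groupEquiv,
    Equiv.coe_fn_mk, columnDigitsEquiv_fst, finFunctionFinEquiv_columnDigitsEquiv_snd]

lemma blockVandermonde_nodeOperator_bijective (hloc : LocalConstraints lam s g (s ^ m) m)
    (a : Fin m) {B : Finset ℕ} (hB : B ⊆ Finset.range g) :
    Function.Bijective (blockVandermonde (fun b : B => nodeOperator lam s g a b) B.card) := by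
  refine blockVandermonde_bijective_of_injective (Fintype.card_coe B) ?_
  rcases B.eq_empty_or_nonempty with rfl | hne
  · exact Function.injective_of_subsingleton _
  · have hdet := hloc a a.isLt B hB hne
    rw [AmatB_eq_submatrix] at hdet
    exact (det_submatrix_parityCheckMatrix_ne_zero_iff _ _ _).mp hdet

theorem det_Hcat_ne_zero
    (hdist : ∀ i < m * g * s, ∀ j < m * g * s, lam i = lam j → i / (s * g) = j / (s * g))
    (hloc : LocalConstraints lam s g (s ^ m) m) {Fs : Finset ℕ}
    (hFs : Fs ⊆ Finset.range (m * g)) :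
    (Hcat lam s g (s ^ m) Fs.card (enum Fs)).det ≠ 0 := by
  rw [Hcat_eq_submatrix hFs, det_submatrix_parityCheckMatrix_ne_zero_iff,
    ← sum_card_nodesInGroup hFs]
  refine blockVandermonde_sigma_injective
    (T := fun (a : Fin m) (b : nodesInGroup g Fs a) => nodeOperator lam s g a b)
    (v := fun a => (nodesInGroup g Fs a).card)
    (fun a => blockVandermonde_nodeOperator_bijective hloc a (Finset.filter_subset _ _))
    (fun a a' h b b' => nodeOperator_commute lam s g h b b')
    fun a a' h b b' => isCoprime_minpoly_nodeOperator (nodeLam_ne_nodeLam hdist h ?_ ?_)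
  · exact Finset.mem_range.mp (Finset.mem_filter.mp b.2).1
  · exact Finset.mem_range.mp (Finset.mem_filter.mp b'.2).1

end Invertibility

section Codewords

variable {F : Type*} [Field F] {lam : ℕ → F} {s g ℓ n : ℕ} {Fs : Finset ℕ}

lemma Hcat_mulVec (D : ℕ → ℕ → F) (ρ : Fin (ℓ * Fs.card)) :
    (Hcat lam s g ℓ Fs.card (enum Fs) *ᵥ fun κ => D (enum Fs (κ / ℓ)) (κ % ℓ)) ρ =
      ∑ q ∈ Fs, ∑ j ∈ Finset.range ℓ,
        Aent lam s g (q / g) (q % g) (ρ / Fs.card) j (ρ % Fs.card) * D q j := by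
  simp only [Matrix.mulVec, dotProduct, Hcat, Matrix.of_apply, ← columnEquiv_fst,
    ← columnEquiv_snd]
  rw [Equiv.sum_comp (columnEquiv ℓ Fs) fun p : Fs × Fin ℓ =>
    Aent lam s g (p.1 / g) (p.1 % g) (ρ / Fs.card) p.2 (ρ % Fs.card) * D p.1 p.2,
    Fintype.sum_prod_type]
  simp only [Finset.sum_range, ← Finset.sum_coe_sort Fs]

lemma InCode.sub {r : ℕ} {C C' : ℕ → ℕ → F} (hC : InCode lam s g ℓ r n C)
    (hC' : InCode lam s g ℓ r n C') : InCode lam s g ℓ r n fun m j => C m j - C' m j := by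
  intro ρ hρ
  simp only [mul_sub, Finset.sum_sub_distrib, hC ρ hρ, hC' ρ hρ, sub_zero]

lemma InCode.eq_zero_of_det_Hcat_ne_zero (hFs : Fs ⊆ Finset.range n)
    (hdet : (Hcat lam s g ℓ Fs.card (enum Fs)).det ≠ 0) {D : ℕ → ℕ → F}
    (hD : InCode lam s g ℓ Fs.card n D) (hout : ∀ q < n, q ∉ Fs → ∀ j < ℓ, D q j = 0)
    {q j : ℕ} (hq : q ∈ Fs) (hj : j < ℓ) : D q j = 0 := by
  have hker : Hcat lam s g ℓ Fs.card (enum Fs) *ᵥ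
      (fun κ => D (enum Fs (κ / ℓ)) (κ % ℓ)) = 0 := by
    funext ρ
    rw [Hcat_mulVec, Pi.zero_apply, ← hD ρ ρ.isLt]
    refine Finset.sum_subset hFs fun q hqn hq => Finset.sum_eq_zero fun j hj => ?_
    rw [hout q (Finset.mem_range.mp hqn) hq j (Finset.mem_range.mp hj), mul_zero]
  have hcolumn := congrFun (Matrix.eq_zero_of_mulVec_eq_zero hdet hker)
    ((columnEquiv ℓ Fs).symm (⟨q, hq⟩, ⟨j, hj⟩))
  simpa only [← columnEquiv_fst, ← columnEquiv_snd, Equiv.apply_symm_apply, Pi.zero_apply] using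
    hcolumn

end Codewords

theorem statement2_general {F : Type*} [Field F] {lam : ℕ → F} {s g m n ℓ : ℕ}
    (hn : n = m * g) (hℓ : ℓ = s ^ m)
    (hdist : ∀ i < n * s, ∀ j < n * s, lam i = lam j → i / (s * g) = j / (s * g))
    (hloc : LocalConstraints lam s g ℓ m) {Fs : Finset ℕ} (hFs : Fs ⊆ Finset.range n) {r : ℕ}
    (hr : Fs.card = r) :
    (Hcat lam s g ℓ r (enum Fs)).det ≠ 0 ∧
      ∀ C C' : ℕ → ℕ → F, InCode lam s g ℓ r n C → InCode lam s g ℓ r n C' →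
        (∀ q < n, q ∉ Fs → ∀ j < ℓ, C q j = C' q j) →
        ∀ q < n, ∀ j < ℓ, C q j = C' q j := by
  subst hn hℓ hr
  have hdet := det_Hcat_ne_zero hdist hloc hFs
  refine ⟨hdet, fun C C' hC hC' hout q hqn j hj => ?_⟩
  by_cases hq : q ∈ Fs
  · exact sub_eq_zero.mp <| (hC.sub hC').eq_zero_of_det_Hcat_ne_zero hFs hdet
      (fun q hqn hq j hj => sub_eq_zero.mpr (hout q hqn hq j hj)) hq hj
  · exact hout q hqn hq j hj

/-- with pairwise distinct `λ_i` satisfying the local constraints, the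
code of Section 2.1 is an `(n,k,ℓ)` MDS array code: for every `r`-subset `Fs` of `[n]`
the matrix `[H_{f₁} | ⋯ | H_{f_r}]` is invertible; equivalently, two codewords agreeing
outside `Fs` agree everywhere, so any `k` coordinates determine the codeword. -/
theorem statement2 (F : Type*) [Field F] [Fintype F] (n k d s ℓ r : ℕ)
    (hk : 1 ≤ k) (hkn : k < n) (hd₁ : k + 1 ≤ d) (hd₂ : d ≤ n - 1)
    (hs : s = d - k + 1) (hdiv : s ∣ n) (hℓ : ℓ = s ^ (n / s)) (hr : r = n - k)
    (lam : ℕ → F)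
    (hdist : ∀ i < n * s, ∀ j < n * s, lam i = lam j → i = j)
    (hloc : LocalConstraints lam s s ℓ (n / s)) :
    ∀ Fs : Finset ℕ, Fs ⊆ Finset.range n → Fs.card = r →
      (Hcat lam s s ℓ r (enum Fs)).det ≠ 0 ∧
      (∀ C C' : ℕ → ℕ → F, InCode lam s s ℓ r n C → InCode lam s s ℓ r n C' →
        (∀ m < n, m ∉ Fs → ∀ j < ℓ, C m j = C' m j) →
        ∀ m < n, ∀ j < ℓ, C m j = C' m j) := by
  intro Fs hFs hcard
  exact statement2_general (Nat.div_mul_cancel hdiv).symm hℓ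
    (fun i hi j hj h => congrArg (· / (s * s)) (hdist i hi j hj h)) hloc hFs hcard
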